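/- Let q = r^2 with r an odd prime power. Suppose q − 1 = e_1 f_1 = e_2 f_2, there exists an integer l ≥ 2 with e_1 ≡ 2^l (mod 2^{l+1}) and 2^l | e_2, and that 2e_2 | e_1(r−1) and e_1 | e_2(r+1). Let s, t be integers with 1 ≤ s ≤ D_1, 1 ≤ t ≤ D_2 and 4 | (s−1)(r+1), and set n_1 = s·f_1 + t·f_2. If n_1 is odd, then there exists an MDS self-dual code over F_q of length n_1 + 1, i.e., a linear code C ⊆ F_q^{n_1+1} with C = C⊥, dim C = (n_1+1)/2, and minimum Hamming distance (n_1+1)/2 + 1. -/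

import Mathlib

/-- The Euclidean dual of a linear code `C ⊆ F^n`. -/
def dualCode {F : Type*} [Field F] {n : ℕ} (C : Submodule F (Fin n → F)) :
    Submodule F (Fin n → F) where
  carrier := {x | ∀ c ∈ C, ∑ i, x i * c i = 0}
  add_mem' := by
    intro a b ha hb c hc
    simp only [Set.mem_setOf_eq] at ha hb ⊢
    simp [Pi.add_apply, add_mul, Finset.sum_add_distrib, ha c hc, hb c hc]
  zero_mem' := by intro c hc; simp
  smul_mem' := by
    intro r a ha c hc
    simp only [Set.mem_setOf_eq] at ha ⊢
    simp [Pi.smul_apply, smul_eq_mul, mul_assoc, ← Finset.mul_sum, ha c hc]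

/-- `C` has minimum Hamming distance `d`. -/
def IsMinDist {F : Type*} [Field F] [DecidableEq F] {n : ℕ}
    (C : Submodule F (Fin n → F)) (d : ℕ) : Prop :=
  (∀ c ∈ C, c ≠ 0 → d ≤ hammingNorm c) ∧ ∃ c ∈ C, c ≠ 0 ∧ hammingNorm c = d

/-!
Let `P` be a monic polynomial of odd degree `n = 2 m + 1` with distinct roots `α₁, …, αₙ` in `F`.
If every `-P'(αᵢ)` is a square, the column multipliers `vᵢ` with `vᵢ² = -1 / P'(αᵢ)` make the
extended generalized Reed–Solomon code of dimension `m + 1` self-dual: by Lagrange interpolation,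
`∑ᵢ f(αᵢ) g(αᵢ) / P'(αᵢ)` is the coefficient of `X ^ (2 m)` in `f g`, which is the product of the
coordinates of `f` and `g` at infinity.

With `D₁ = e₁ / gcd(e₁, e₂)` and `D₂ = e₂ / gcd(e₁, e₂)` we have `D₁ f₁ = D₂ f₂`. The roots of `P`
are taken to be the solutions of `x ^ f₁ = u` for `s` roots `u` of `u ^ D₁ = 1`, and of `x ^ f₂ = v`
for `t` roots `v` of `v ^ D₂ = -1`; the two families are disjoint since `x ^ (D₁ f₁)` is `1` on the
first and `-1` on the second. The value `P'(x)` at a root is a product of squares: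
* a root `x` satisfies `x ^ (2 D₁ f₁) = 1`, and it is a square as `4 D₁ f₁ ∣ q - 1`;
* elements of the subfield of order `r` are squares in `F`; it contains every `v`, and `x ^ f₂` for
  `x` in the first family;
* if `u` and `w` are distinct and `u ^ (r + 1) = w ^ (r + 1) = 1`, then
  `(u - w) ^ (r - 1) = -1 / (u w)`, and `D₁ ∣ (r + 1) / 2` gives
  `(u - w) ^ ((q - 1) / 2) = (-1) ^ ((r + 1) / 2)`. The `s - 1` differences at a given `u` thus have
  square product as `4 ∣ (s - 1) (r + 1)`;
* for `x` in the second family `x ^ f₁ = -w` with `w ^ D₁ = 1`, and the same computation shows that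
  each `w + u` is a square.
-/

open Polynomial

section LinearCodes

variable {F : Type*} [Field F] {n : ℕ}

lemma finrank_dualCode (C : Submodule F (Fin n → F)) :
    Module.finrank F (dualCode C) = n - Module.finrank F C := by
  have hB : (Matrix.toBilin' (1 : Matrix (Fin n) (Fin n) F)).Nondegenerate :=
    Matrix.Nondegenerate.toBilin' (Matrix.nondegenerate_of_det_ne_zero (by simp))
  have horth : (Matrix.toBilin' (1 : Matrix (Fin n) (Fin n) F)).orthogonal C = dualCode C := by
    ext x
    simp only [LinearMap.BilinForm.mem_orthogonal_iff, Matrix.toBilin'_apply', Matrix.one_mulVec,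
      dotProduct_comm _ x]
    rfl
  rw [← horth, LinearMap.BilinForm.finrank_orthogonal hB, Module.finrank_fin_fun]

lemma dualCode_eq_self_of_le {C : Submodule F (Fin n → F)} (hle : C ≤ dualCode C)
    (hdim : n = 2 * Module.finrank F C) : dualCode C = C :=
  (Submodule.eq_of_le_of_finrank_eq hle (by rw [finrank_dualCode]; omega)).symm

lemma hammingNorm_snoc {M : Type*} [Zero M] [DecidableEq M] (x : Fin n → M) (a : M) :
    hammingNorm (Fin.snoc x a : Fin (n + 1) → M) = hammingNorm x + if a = 0 then 0 else 1 := by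
  simp only [hammingNorm, Finset.card_filter, Fin.sum_univ_castSucc, Fin.snoc_castSucc,
    Fin.snoc_last, ite_not]

end LinearCodes

section ExtendedGRS

variable {F : Type*} [Field F] {n m : ℕ} {α v : Fin n → F}

/-- The encoder `f ↦ (v₁ f(α₁), …, vₙ f(αₙ), fₘ)` of the extended generalized Reed–Solomon code
with locators `α` and multipliers `v`. On polynomials of degree at most `m`, the last coordinate is
evaluation at the point at infinity. -/
noncomputable def extendedGRSEncoder (m : ℕ) (α v : Fin n → F) : F[X] →ₗ[F] (Fin (n + 1) → F) where
  toFun f := Fin.snoc (fun i ↦ v i * f.eval (α i)) (f.coeff m)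
  map_add' f g := by
    ext i
    refine Fin.lastCases ?_ (fun i ↦ ?_) i <;> simp [mul_add]
  map_smul' c f := by
    ext i
    refine Fin.lastCases ?_ (fun i ↦ ?_) i <;> simp [mul_left_comm]

/-- The extended generalized Reed–Solomon code of dimension `m + 1`, obtained by encoding the
polynomials of degree at most `m`. -/
noncomputable def extendedGRSCode (m : ℕ) (α v : Fin n → F) : Submodule F (Fin (n + 1) → F) :=
  (degreeLT F (m + 1)).map (extendedGRSEncoder m α v)

lemma extendedGRSEncoder_apply (f : F[X]) :
    extendedGRSEncoder m α v f = Fin.snoc (fun i ↦ v i * f.eval (α i)) (f.coeff m) :=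
  rfl

lemma mem_degreeLT_succ_iff {f : F[X]} : f ∈ degreeLT F (m + 1) ↔ f.natDegree ≤ m := by
  rw [degreeLT_succ_eq_degreeLE, mem_degreeLE, natDegree_le_iff_degree_le]

lemma card_filter_eval_eq_zero_le [DecidableEq F] (hα : α.Injective) {f : F[X]} (hf : f ≠ 0) :
    (Finset.univ.filter fun i ↦ f.eval (α i) = 0).card ≤ f.natDegree := by
  rw [← Finset.card_image_of_injective _ hα]
  refine card_le_degree_of_subset_roots fun x hx ↦ ?_
  obtain ⟨i, hi, rfl⟩ := Finset.mem_image.1 (Finset.mem_def.2 hx)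
  exact (mem_roots hf).2 (Finset.mem_filter.1 hi).2

lemma le_hammingNorm_extendedGRSEncoder_add [DecidableEq F] (hα : α.Injective)
    (hv : ∀ i, v i ≠ 0) {f : F[X]} (hf : f ≠ 0) (hdeg : f.natDegree ≤ m) :
    n + 1 ≤ hammingNorm (extendedGRSEncoder m α v f) + m := by
  have hzeros := card_filter_eval_eq_zero_le hα hf
  have hsplit : (Finset.univ.filter fun i ↦ f.eval (α i) = 0).card +
      hammingNorm (fun i ↦ v i * f.eval (α i)) = n := by
    simpa [hammingNorm, hv] using
      Finset.univ.card_filter_add_card_filter_not fun i ↦ f.eval (α i) = 0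
  rw [extendedGRSEncoder_apply, hammingNorm_snoc]
  split_ifs with hlead
  · have hne : f.natDegree ≠ m := by
      rintro rfl
      exact hf (leadingCoeff_eq_zero.1 hlead)
    omega
  · omega

lemma extendedGRSEncoder_ne_zero (hα : α.Injective) (hv : ∀ i, v i ≠ 0) (hmn : m ≤ n) {f : F[X]}
    (hf : f ≠ 0) (hdeg : f.natDegree ≤ m) : extendedGRSEncoder m α v f ≠ 0 := by
  classical
  have hle := le_hammingNorm_extendedGRSEncoder_add hα hv hf hdeg
  rw [← hammingNorm_pos_iff]
  omega

lemma finrank_extendedGRSCode (hα : α.Injective) (hv : ∀ i, v i ≠ 0) (hmn : m ≤ n) :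
    Module.finrank F (extendedGRSCode m α v) = m + 1 := by
  have hinj : Function.Injective ((extendedGRSEncoder m α v).domRestrict (degreeLT F (m + 1))) := by
    refine (injective_iff_map_eq_zero _).2 fun f hf ↦ ?_
    by_contra hf0
    exact extendedGRSEncoder_ne_zero hα hv hmn (Subtype.coe_ne_coe.2 hf0)
      (mem_degreeLT_succ_iff.1 f.2) hf
  rw [extendedGRSCode, ← LinearMap.range_domRestrict, LinearMap.finrank_range_of_inj hinj,
    (degreeLTEquiv F (m + 1)).finrank_eq, Module.finrank_fin_fun]

lemma exists_hammingNorm_extendedGRSEncoder_add_le [DecidableEq F] (hmn : m ≤ n) :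
    ∃ f : F[X], f ≠ 0 ∧ f.natDegree ≤ m ∧
      hammingNorm (extendedGRSEncoder m α v f) + m ≤ n + 1 := by
  obtain ⟨T, -, hT⟩ : ∃ T ⊆ (Finset.univ : Finset (Fin n)), T.card = m :=
    Finset.exists_subset_card_eq (by simpa using hmn)
  refine ⟨Lagrange.nodal T α, Lagrange.nodal_ne_zero, by rw [Lagrange.natDegree_nodal, hT], ?_⟩
  have hsupp : (Finset.univ.filter fun i ↦ v i * (Lagrange.nodal T α).eval (α i) ≠ 0) ⊆ Tᶜ :=
    fun i hi ↦ Finset.mem_compl.2 fun hiT ↦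
      (Finset.mem_filter.1 hi).2 (by rw [Lagrange.eval_nodal_at_node hiT, mul_zero])
  have hcard := Finset.card_le_card hsupp
  rw [Finset.card_compl, hT, Fintype.card_fin] at hcard
  rw [extendedGRSEncoder_apply, hammingNorm_snoc, hammingNorm]
  split_ifs <;> omega

lemma isMinDist_extendedGRSCode [DecidableEq F] (hα : α.Injective) (hv : ∀ i, v i ≠ 0)
    (hmn : m ≤ n) : IsMinDist (extendedGRSCode m α v) (n + 1 - m) := by
  constructor
  · rintro _ ⟨f, hf, rfl⟩ hc
    have hf0 : f ≠ 0 := by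
      rintro rfl
      exact hc (map_zero _)
    have := le_hammingNorm_extendedGRSEncoder_add hα hv hf0 (mem_degreeLT_succ_iff.1 hf)
    omega
  · obtain ⟨f, hf, hdeg, hle⟩ := exists_hammingNorm_extendedGRSEncoder_add_le (α := α) (v := v) hmn
    have hge := le_hammingNorm_extendedGRSEncoder_add hα hv hf hdeg
    exact ⟨_, ⟨f, mem_degreeLT_succ_iff.2 hdeg, rfl⟩,
      extendedGRSEncoder_ne_zero hα hv hmn hf hdeg, by omega⟩

lemma coeff_eq_sum_eval_mul_nodalWeight (hα : α.Injective) {f : F[X]} (hf : f.natDegree < n) :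
    f.coeff (n - 1) = ∑ i, f.eval (α i) * Lagrange.nodalWeight Finset.univ α i := by
  have hdeg : f.degree < (Finset.univ : Finset (Fin n)).card := by
    rw [Finset.card_fin]
    exact degree_le_natDegree.trans_lt (by exact_mod_cast hf)
  simpa [div_eq_mul_inv, Lagrange.nodalWeight] using Lagrange.coeff_eq_sum hα.injOn hdeg

lemma ne_zero_of_sq_eq_neg_nodalWeight (hα : α.Injective)
    (hv : ∀ i, v i ^ 2 = -Lagrange.nodalWeight Finset.univ α i) (i : Fin n) : v i ≠ 0 := fun h ↦ by
  simpa [h, Lagrange.nodalWeight_ne_zero hα.injOn (Finset.mem_univ i)] using hv i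

lemma dualCode_extendedGRSCode (hn : n = 2 * m + 1) (hα : α.Injective)
    (hv : ∀ i, v i ^ 2 = -Lagrange.nodalWeight Finset.univ α i) :
    dualCode (extendedGRSCode m α v) = extendedGRSCode m α v := by
  have hv0 := ne_zero_of_sq_eq_neg_nodalWeight hα hv
  refine dualCode_eq_self_of_le ?_ (by rw [finrank_extendedGRSCode hα hv0 (by omega)]; omega)
  rintro _ ⟨f, hf, rfl⟩ _ ⟨g, hg, rfl⟩
  have hf := mem_degreeLT_succ_iff.1 hf
  have hg := mem_degreeLT_succ_iff.1 hg
  have hcoeff : f.coeff m * g.coeff m =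
      ∑ i, f.eval (α i) * g.eval (α i) * Lagrange.nodalWeight Finset.univ α i := by
    have hfg : (f * g).natDegree < n := natDegree_mul_le.trans_lt (by omega)
    rw [← coeff_mul_add_eq_of_natDegree_le hf hg, show m + m = n - 1 by omega,
      coeff_eq_sum_eval_mul_nodalWeight hα hfg]
    simp only [eval_mul]
  simp only [extendedGRSEncoder_apply, Fin.sum_univ_castSucc, Fin.snoc_castSucc, Fin.snoc_last]
  rw [hcoeff, ← Finset.sum_add_distrib]
  refine Finset.sum_eq_zero fun i _ ↦ ?_
  linear_combination f.eval (α i) * g.eval (α i) * hv i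

end ExtendedGRS

section SplitPolynomials

variable {F : Type*} [Field F] {P : F[X]}

lemma exists_eq_nodal_of_splits {n : ℕ} (hP : P.Monic) (hsplits : P.Splits) (hsep : P.Separable)
    (hdeg : P.natDegree = n) :
    ∃ α : Fin n → F, α.Injective ∧ P = Lagrange.nodal Finset.univ α := by
  classical
  let S : Finset F := ⟨P.roots, nodup_roots hsep⟩
  let e : S ≃ Fin n := Finset.equivFinOfCardEq (hsplits.natDegree_eq_card_roots.symm.trans hdeg)
  refine ⟨fun i ↦ e.symm i, Subtype.val_injective.comp e.symm.injective, ?_⟩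
  calc P = ∏ a ∈ S, (X - C a) := hsplits.eq_prod_roots_of_monic hP
    _ = ∏ a : S, (X - C (a : F)) := (Finset.prod_coe_sort S fun a ↦ X - C a).symm
    _ = _ := (e.symm.prod_comp fun a : S ↦ X - C (a : F)).symm

theorem exists_mds_selfDual_of_isSquare_derivative [DecidableEq F] {n m : ℕ} (hn : n = 2 * m + 1)
    (hP : P.Monic) (hsplits : P.Splits) (hsep : P.Separable) (hdeg : P.natDegree = n)
    (hsq : ∀ a, P.eval a = 0 → IsSquare (-P.derivative.eval a)) :
    ∃ C : Submodule F (Fin (n + 1) → F),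
      dualCode C = C ∧ Module.finrank F C = m + 1 ∧ IsMinDist C (m + 2) := by
  obtain ⟨α, hα, rfl⟩ := exists_eq_nodal_of_splits hP hsplits hsep hdeg
  have hw (i : Fin n) : ∃ w, w ^ 2 = -Lagrange.nodalWeight Finset.univ α i := by
    rw [Lagrange.nodalWeight_eq_eval_derivative_nodal (Finset.mem_univ i), ← inv_neg]
    obtain ⟨w, hw⟩ := (hsq _ (Lagrange.eval_nodal_at_node (Finset.mem_univ i))).inv
    exact ⟨w, by rw [hw, sq]⟩
  choose v hv using hw
  have hv0 := ne_zero_of_sq_eq_neg_nodalWeight hα hv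
  have hmn : m ≤ n := by omega
  refine ⟨extendedGRSCode m α v, dualCode_extendedGRSCode hn hα hv,
    finrank_extendedGRSCode hα hv0 hmn, ?_⟩
  convert isMinDist_extendedGRSCode hα hv0 hmn using 1
  omega

end SplitPolynomials

section FiniteField

variable {F : Type*} [Field F] [Fintype F]

lemma exists_ringHom_eq_pow {r n : ℕ} (hn : n ≠ 0) (hF : Fintype.card F = r ^ n) :
    ∃ φ : F →+* F, ∀ x, φ x = x ^ r := by
  obtain ⟨p, k, hp, -, rfl⟩ : IsPrimePow r :=
    (isPrimePow_pow_iff hn).1 (hF ▸ Fintype.isPrimePow_card_of_field)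
  have : Fact p.Prime := ⟨hp.nat_prime⟩
  have : CharP F p := charP_of_card_eq_prime_pow (f := k * n) (by rw [hF, pow_mul])
  exact ⟨iterateFrobenius F p k, iterateFrobenius_def p k⟩

lemma isSquare_of_pow_eq_one {a : F} {k : ℕ} (hk : 2 * k ∣ Fintype.card F - 1)
    (ha : a ^ k = 1) : IsSquare a := by
  have hcard : 1 < Fintype.card F := Fintype.one_lt_card
  have hk0 : k ≠ 0 := by
    rintro rfl
    rw [mul_zero, zero_dvd_iff] at hk
    omega
  have hodd : ringChar F ≠ 2 := fun h ↦ by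
    have := FiniteField.even_card_iff_char_two.1 h
    have := (dvd_mul_right 2 k).trans hk
    omega
  obtain ⟨c, hc⟩ := hk
  rw [FiniteField.isSquare_iff hodd (ne_zero_pow hk0 (by simp [ha])),
    show Fintype.card F / 2 = k * c by rw [mul_assoc] at hc; omega, pow_mul, ha, one_pow]

lemma X_pow_sub_one_dvd_X_pow_card_sub_X {k : ℕ} (hk : k ∣ Fintype.card F - 1) :
    (X ^ k - 1 : F[X]) ∣ X ^ Fintype.card F - X := by
  obtain ⟨c, hc⟩ := hk
  have hX : (X ^ Fintype.card F - X : F[X]) = X * ((X ^ k) ^ c - 1 ^ c) := by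
    rw [← pow_mul, ← hc, one_pow, mul_sub, mul_one, ← pow_succ',
      Nat.sub_add_cancel Fintype.card_pos]
  exact hX ▸ (sub_dvd_pow_sub_pow _ _ _).mul_left _

lemma X_pow_sub_C_dvd_X_pow_card_sub_X {k d : ℕ} {c : F} (hk : k * d ∣ Fintype.card F - 1)
    (hc : c ^ d = 1) : (X ^ k - C c : F[X]) ∣ X ^ Fintype.card F - X := by
  refine dvd_trans ?_ (X_pow_sub_one_dvd_X_pow_card_sub_X hk)
  simpa [pow_mul, ← C_pow, hc] using sub_dvd_pow_sub_pow (X ^ k) (C c) d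

lemma splits_of_dvd_X_pow_card_sub_X {P : F[X]} (hP : P ∣ X ^ Fintype.card F - X) :
    P.Splits := by
  have hne : (X ^ Fintype.card F - X : F[X]) ≠ 0 :=
    FiniteField.X_pow_card_sub_X_ne_zero F Fintype.one_lt_card
  refine Splits.of_dvd (splits_iff_card_roots.2 ?_) hne hP
  rw [FiniteField.roots_X_pow_card_sub_X, Finset.card_val, Finset.card_univ,
    FiniteField.X_pow_card_sub_X_natDegree_eq F Fintype.one_lt_card]

lemma separable_of_dvd_X_pow_card_sub_X {P : F[X]} (hP : P ∣ X ^ Fintype.card F - X) :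
    P.Separable :=
  (galois_poly_separable (ringChar F) _ (ringChar.dvd (FiniteField.cast_card_eq_zero F))).of_dvd hP

lemma exists_finset_card_eq_forall_pow_eq {k d s : ℕ} {c : F} (hk : k * d ∣ Fintype.card F - 1)
    (hc : c ^ d = 1) (hs : s ≤ k) : ∃ U : Finset F, U.card = s ∧ ∀ u ∈ U, u ^ k = c := by
  classical
  have hdvd := X_pow_sub_C_dvd_X_pow_card_sub_X hk hc
  have hcard : (X ^ k - C c).roots.toFinset.card = k := by
    rw [Multiset.toFinset_card_of_nodup (nodup_roots (separable_of_dvd_X_pow_card_sub_X hdvd)),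
      ← (splits_of_dvd_X_pow_card_sub_X hdvd).natDegree_eq_card_roots, natDegree_X_pow_sub_C]
  obtain ⟨U, hU, hUs⟩ := Finset.exists_subset_card_eq (hs.trans hcard.ge)
  refine ⟨U, hUs, fun u hu ↦ ?_⟩
  simpa [sub_eq_zero] using (mem_roots'.1 (Multiset.mem_toFinset.1 (hU hu))).2

end FiniteField

lemma pow_eq_self_of_pow_eq_one {M : Type*} [Monoid M] {a : M} {k r : ℕ} (hr : r ≠ 0)
    (hk : k ∣ r - 1) (ha : a ^ k = 1) : a ^ r = a := by
  obtain ⟨c, hc⟩ := hk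
  rw [← Nat.sub_one_add_one hr, pow_succ, hc, pow_mul, ha, one_pow, one_mul]

lemma two_mul_half_succ {r : ℕ} (hr : Odd r) : 2 * ((r + 1) / 2) = r + 1 :=
  Nat.two_mul_div_two_of_even hr.add_one

lemma two_mul_pred_mul_half_succ {r : ℕ} (hr : Odd r) :
    2 * ((r - 1) * ((r + 1) / 2)) = r ^ 2 - 1 := by
  rw [mul_left_comm, two_mul_half_succ hr, mul_comm, ← Nat.sq_sub_sq, one_pow]

lemma pow_succ_eq_one_of_pow_half_succ_eq_one {M : Type*} [Monoid M] {r : ℕ} (hr : Odd r) {u : M}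
    (hu : u ^ ((r + 1) / 2) = 1) : u ^ (r + 1) = 1 := by
  rw [← two_mul_half_succ hr, mul_comm, pow_mul, hu, one_pow]

section SquareCard

variable {F : Type*} [Field F] [Fintype F] {r : ℕ}

lemma sub_pow_pred_mul_eq_neg_one (hF : Fintype.card F = r ^ 2) {u v : F} (huv : u ≠ v)
    (hu : u ^ (r + 1) = 1) (hv : v ^ (r + 1) = 1) : (u - v) ^ (r - 1) * (u * v) = -1 := by
  obtain ⟨φ, hφ⟩ := exists_ringHom_eq_pow two_ne_zero hF
  have hr : r ≠ 0 := by
    rintro rfl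
    exact Fintype.card_ne_zero (hF.trans (by simp))
  have hsub : (u - v) ^ r = u ^ r - v ^ r := by simp only [← hφ, map_sub]
  refine mul_right_cancel₀ (sub_ne_zero.2 huv) ?_
  calc (u - v) ^ (r - 1) * (u * v) * (u - v) = (u - v) ^ (r - 1 + 1) * (u * v) := by ring
    _ = (u ^ r - v ^ r) * (u * v) := by rw [Nat.sub_one_add_one hr, hsub]
    _ = u ^ (r + 1) * v - v ^ (r + 1) * u := by ring
    _ = -1 * (u - v) := by rw [hu, hv]; ring

variable (hr : Odd r) (hF : Fintype.card F = r ^ 2)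

include hr hF

lemma isSquare_of_pow_eq_self {a : F} (ha : a ^ r = a) : IsSquare a := by
  obtain rfl | ha0 := eq_or_ne a 0
  · exact IsSquare.zero
  have hdvd : 2 * (r - 1) ∣ Fintype.card F - 1 :=
    ⟨(r + 1) / 2, by rw [hF, ← two_mul_pred_mul_half_succ hr, mul_assoc]⟩
  refine isSquare_of_pow_eq_one hdvd (mul_right_cancel₀ ha0 ?_)
  rw [← pow_succ, Nat.sub_one_add_one hr.pos.ne', ha, one_mul]

lemma isSquare_neg_one_of_card_eq_sq : IsSquare (-1 : F) :=
  isSquare_of_pow_eq_self hr hF hr.neg_one_pow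

lemma isSquare_natCast (a : ℕ) : IsSquare (a : F) := by
  obtain ⟨φ, hφ⟩ := exists_ringHom_eq_pow two_ne_zero hF
  exact isSquare_of_pow_eq_self hr hF (by rw [← hφ, map_natCast])

lemma isSquare_sub_of_pow_eq_self {a b : F} (ha : a ^ r = a) (hb : b ^ r = b) :
    IsSquare (a - b) := by
  obtain ⟨φ, hφ⟩ := exists_ringHom_eq_pow two_ne_zero hF
  exact isSquare_of_pow_eq_self hr hF (by rw [← hφ, map_sub, hφ, hφ, ha, hb])

lemma sub_pow_half_card_eq {u v : F} (huv : u ≠ v) (hu : u ^ ((r + 1) / 2) = 1)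
    (hv : v ^ ((r + 1) / 2) = 1) :
    (u - v) ^ ((r - 1) * ((r + 1) / 2)) = (-1) ^ ((r + 1) / 2) := by
  have h := sub_pow_pred_mul_eq_neg_one hF huv (pow_succ_eq_one_of_pow_half_succ_eq_one hr hu)
    (pow_succ_eq_one_of_pow_half_succ_eq_one hr hv)
  rw [← h, mul_pow, mul_pow, hu, hv, mul_one, mul_one, pow_mul]

lemma isSquare_prod_erase_sub [DecidableEq F] {U : Finset F}
    (hU : ∀ u ∈ U, u ^ ((r + 1) / 2) = 1) (heven : Even ((U.card - 1) * ((r + 1) / 2))) {u : F}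
    (hu : u ∈ U) : IsSquare (∏ w ∈ U.erase u, (u - w)) := by
  refine isSquare_of_pow_eq_one (hF ▸ two_mul_pred_mul_half_succ hr).dvd ?_
  have hterm : ∀ w ∈ U.erase u,
      (u - w) ^ ((r - 1) * ((r + 1) / 2)) = (-1) ^ ((r + 1) / 2) := fun w hw ↦
    sub_pow_half_card_eq hr hF (Finset.ne_of_mem_erase hw).symm (hU u hu)
      (hU w (Finset.mem_of_mem_erase hw))
  rw [← Finset.prod_pow, Finset.prod_congr rfl hterm, Finset.prod_const,
    Finset.card_erase_of_mem hu, ← pow_mul, mul_comm, heven.neg_one_pow]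

lemma isSquare_add_of_pow_half_succ_eq_one {u v : F} (hu : u ^ ((r + 1) / 2) = 1)
    (hv : v ^ ((r + 1) / 2) = 1) : IsSquare (u + v) := by
  obtain huv | huv := eq_or_ne u (-v)
  · simp [huv]
  have hneg : (-v) ^ (r + 1) = 1 := by
    rw [hr.add_one.neg_pow, pow_succ_eq_one_of_pow_half_succ_eq_one hr hv]
  have h := sub_pow_pred_mul_eq_neg_one hF huv (pow_succ_eq_one_of_pow_half_succ_eq_one hr hu) hneg
  rw [sub_neg_eq_add, mul_neg, mul_neg, neg_inj] at h
  refine isSquare_of_pow_eq_one (hF ▸ two_mul_pred_mul_half_succ hr).dvd ?_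
  calc (u + v) ^ ((r - 1) * ((r + 1) / 2))
      = ((u + v) ^ (r - 1) * (u * v)) ^ ((r + 1) / 2) := by
        rw [mul_pow, mul_pow, hu, hv, mul_one, mul_one, pow_mul]
    _ = 1 := by rw [h, one_pow]

end SquareCard

section CosetPolynomial

/-- The monic polynomial `∏ u ∈ U, (X ^ f - u)`. Over a field, if the elements of `U` are nonzero
`f`-th powers, its zero set is a union of cosets of the group of `f`-th roots of unity. -/
noncomputable def cosetPoly {R : Type*} [CommRing R] (U : Finset R) (f : ℕ) : R[X] :=
  ∏ u ∈ U, (X ^ f - C u)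

variable {R : Type*} [CommRing R] {U : Finset R} {f : ℕ}

lemma cosetPoly_eq_expand_nodal : cosetPoly U f = expand R f (Lagrange.nodal U id) := by
  simp [cosetPoly, Lagrange.nodal, map_prod]

lemma monic_cosetPoly (hf : f ≠ 0) : (cosetPoly U f).Monic :=
  monic_prod_of_monic _ _ fun u _ ↦ monic_X_pow_sub_C u hf

lemma natDegree_cosetPoly [Nontrivial R] : (cosetPoly U f).natDegree = U.card * f := by
  rw [cosetPoly_eq_expand_nodal, natDegree_expand, Lagrange.natDegree_nodal]

lemma eval_cosetPoly (x : R) : (cosetPoly U f).eval x = ∏ u ∈ U, (x ^ f - u) := by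
  simp [cosetPoly, eval_prod]

lemma eval_cosetPoly_eq_zero_iff [IsDomain R] {x : R} :
    (cosetPoly U f).eval x = 0 ↔ x ^ f ∈ U := by
  simp [eval_cosetPoly, Finset.prod_eq_zero_iff, sub_eq_zero]

lemma eval_derivative_cosetPoly [DecidableEq R] {x : R} (hx : x ^ f ∈ U) :
    (cosetPoly U f).derivative.eval x =
      (∏ u ∈ U.erase (x ^ f), (x ^ f - u)) * (f * x ^ (f - 1)) := by
  have hnode := Lagrange.eval_nodal_derivative_eval_node_eq (v := id) hx
  simp only [Lagrange.eval_nodal, id_eq] at hnode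
  rw [cosetPoly_eq_expand_nodal, derivative_expand, eval_mul, expand_eval, hnode]
  simp

variable {F : Type*} [Field F] {U : Finset F}

lemma cosetPoly_dvd_X_pow_sub_C {k : ℕ} {c : F} (hU : ∀ u ∈ U, u ^ k = c) :
    cosetPoly U f ∣ X ^ (f * k) - C c := by
  have hnodal : Lagrange.nodal U id ∣ X ^ k - C c :=
    Finset.prod_dvd_of_coprime (fun u _ w _ h ↦ pairwise_coprime_X_sub_C Function.injective_id h)
      fun u hu ↦ dvd_iff_isRoot.2 (by simp [hU u hu])
  have h := map_dvd (expand F f) hnodal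
  rwa [← cosetPoly_eq_expand_nodal, map_sub, map_pow, expand_X, expand_C, ← pow_mul] at h

variable [Fintype F] {r : ℕ} (hr : Odd r) (hF : Fintype.card F = r ^ 2)

include hr hF

lemma isSquare_eval_derivative_cosetPoly [DecidableEq F] {x : F} (hx : IsSquare x) (hxU : x ^ f ∈ U)
    (hprod : IsSquare (∏ u ∈ U.erase (x ^ f), (x ^ f - u))) :
    IsSquare ((cosetPoly U f).derivative.eval x) := by
  rw [eval_derivative_cosetPoly hxU]
  exact hprod.mul ((isSquare_natCast hr hF f).mul (hx.pow _))

lemma isSquare_eval_cosetPoly_of_pow_eq_self (hU : ∀ u ∈ U, u ^ r = u) {x : F}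
    (hx : (x ^ f) ^ r = x ^ f) : IsSquare ((cosetPoly U f).eval x) := by
  rw [eval_cosetPoly]
  exact Finset.isSquare_prod _ fun u hu ↦ isSquare_sub_of_pow_eq_self hr hF hx (hU u hu)

lemma isSquare_eval_cosetPoly_of_neg_pow_eq_one (hU : ∀ u ∈ U, u ^ ((r + 1) / 2) = 1) {x : F}
    (hx : (-x ^ f) ^ ((r + 1) / 2) = 1) : IsSquare ((cosetPoly U f).eval x) := by
  rw [eval_cosetPoly]
  refine Finset.isSquare_prod _ fun u hu ↦ ?_
  rw [show x ^ f - u = -1 * (-x ^ f + u) by ring]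
  exact (isSquare_neg_one_of_card_eq_sq hr hF).mul
    (isSquare_add_of_pow_half_succ_eq_one hr hF hx (hU u hu))

end CosetPolynomial

section TwoCosetFamilies

variable {F : Type*} [Field F] [Fintype F] {r D₁ D₂ f₁ f₂ : ℕ} {U V : Finset F}

lemma cosetPoly_mul_cosetPoly_dvd (hm : D₁ * f₁ = D₂ * f₂)
    (hcard : 2 * (D₁ * f₁) ∣ Fintype.card F - 1) (hU : ∀ u ∈ U, u ^ D₁ = 1)
    (hV : ∀ v ∈ V, v ^ D₂ = -1) :
    cosetPoly U f₁ * cosetPoly V f₂ ∣ X ^ Fintype.card F - X := by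
  refine dvd_trans ?_ (X_pow_sub_one_dvd_X_pow_card_sub_X hcard)
  convert mul_dvd_mul (cosetPoly_dvd_X_pow_sub_C (f := f₁) hU)
    (cosetPoly_dvd_X_pow_sub_C (f := f₂) hV) using 1
  rw [mul_comm f₁, mul_comm f₂, ← hm, C_neg, C_1]
  ring

lemma isSquare_eval_derivative_cosetPoly_mul (hr : Odd r) (hF : Fintype.card F = r ^ 2)
    (hodd : Odd D₁) (hD₁ : D₁ ∣ (r + 1) / 2) (hD₂ : 2 * D₂ ∣ r - 1) (hm : D₁ * f₁ = D₂ * f₂)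
    (hcard : 4 * (D₁ * f₁) ∣ Fintype.card F - 1) (hU : ∀ u ∈ U, u ^ D₁ = 1)
    (hV : ∀ v ∈ V, v ^ D₂ = -1) (heven : Even ((U.card - 1) * ((r + 1) / 2))) {x : F}
    (hx : (cosetPoly U f₁ * cosetPoly V f₂).eval x = 0) :
    IsSquare ((cosetPoly U f₁ * cosetPoly V f₂).derivative.eval x) := by
  classical
  have hU' : ∀ u ∈ U, u ^ ((r + 1) / 2) = 1 := fun u hu ↦
    orderOf_dvd_iff_pow_eq_one.1 ((orderOf_dvd_of_pow_eq_one (hU u hu)).trans hD₁)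
  have hV' : ∀ v ∈ V, v ^ r = v := fun v hv ↦
    pow_eq_self_of_pow_eq_one hr.pos.ne' hD₂ (by rw [mul_comm, pow_mul, hV v hv, neg_one_sq])
  have hxsq (c : F) (hc : c ^ 2 = 1) (hxc : x ^ (D₁ * f₁) = c) : IsSquare x :=
    isSquare_of_pow_eq_one (k := D₁ * f₁ * 2) (by convert hcard using 1; ring)
      (by rw [pow_mul, hxc, hc])
  rw [derivative_mul, eval_add, eval_mul, eval_mul]
  rw [eval_mul, mul_eq_zero] at hx
  obtain hxA | hxB := hx
  · have hxU := eval_cosetPoly_eq_zero_iff.1 hxA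
    have hxm : x ^ (D₁ * f₁) = 1 := by rw [mul_comm, pow_mul, hU _ hxU]
    have hxV : (x ^ f₂) ^ r = x ^ f₂ :=
      pow_eq_self_of_pow_eq_one hr.pos.ne' ((dvd_mul_left _ _).trans hD₂)
        (by rw [← pow_mul, mul_comm, ← hm, hxm])
    rw [hxA, zero_mul, add_zero]
    exact (isSquare_eval_derivative_cosetPoly hr hF (hxsq 1 (one_pow 2) hxm) hxU
      (isSquare_prod_erase_sub hr hF hU' heven hxU)).mul
      (isSquare_eval_cosetPoly_of_pow_eq_self hr hF hV' hxV)
  · have hxV := eval_cosetPoly_eq_zero_iff.1 hxB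
    have hxm : x ^ (D₁ * f₁) = -1 := by rw [hm, mul_comm, pow_mul, hV _ hxV]
    have hxU : (-x ^ f₁) ^ D₁ = 1 := by
      rw [hodd.neg_pow, ← pow_mul, mul_comm, hxm, neg_neg]
    rw [hxB, mul_zero, zero_add]
    refine (isSquare_eval_cosetPoly_of_neg_pow_eq_one hr hF hU' ?_).mul
      (isSquare_eval_derivative_cosetPoly hr hF (hxsq (-1) neg_one_sq hxm) hxV
        (Finset.isSquare_prod _ fun v hv ↦ isSquare_sub_of_pow_eq_self hr hF (hV' _ hxV)
          (hV' v (Finset.mem_of_mem_erase hv))))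
    exact orderOf_dvd_iff_pow_eq_one.1 ((orderOf_dvd_of_pow_eq_one hxU).trans hD₁)

theorem exists_mds_selfDual_of_card_eq_sq [DecidableEq F] {s t m : ℕ} (hr : Odd r)
    (hF : Fintype.card F = r ^ 2) (hodd : Odd D₁) (hD₁ : D₁ ∣ (r + 1) / 2) (hD₂ : 2 * D₂ ∣ r - 1)
    (hm : D₁ * f₁ = D₂ * f₂) (hcard : 4 * (D₁ * f₁) ∣ Fintype.card F - 1) (hs : s ≤ D₁)
    (ht : t ≤ D₂) (heven : Even ((s - 1) * ((r + 1) / 2))) (hn : s * f₁ + t * f₂ = 2 * m + 1) :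
    ∃ C : Submodule F (Fin (s * f₁ + t * f₂ + 1) → F),
      dualCode C = C ∧ Module.finrank F C = m + 1 ∧ IsMinDist C (m + 2) := by
  have hm0 : D₁ * f₁ ≠ 0 := fun h ↦ by
    have := Fintype.one_lt_card (α := F)
    rw [h, mul_zero, zero_dvd_iff] at hcard
    omega
  have hf₁ : f₁ ≠ 0 := right_ne_zero_of_mul hm0
  have hf₂ : f₂ ≠ 0 := right_ne_zero_of_mul (hm ▸ hm0)
  have hD₁card : D₁ * 1 ∣ Fintype.card F - 1 :=
    (mul_dvd_mul_left D₁ (one_dvd f₁)).trans ((dvd_mul_left _ _).trans hcard)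
  have hD₂card : D₂ * 2 ∣ Fintype.card F - 1 := by
    rw [hF, mul_comm, ← one_pow 2, Nat.sq_sub_sq]
    exact hD₂.mul_left _
  obtain ⟨U, rfl, hU⟩ := exists_finset_card_eq_forall_pow_eq hD₁card (pow_one (1 : F)) hs
  obtain ⟨V, rfl, hV⟩ := exists_finset_card_eq_forall_pow_eq hD₂card (neg_one_sq (R := F)) ht
  have hdvd : cosetPoly U f₁ * cosetPoly V f₂ ∣ X ^ Fintype.card F - X :=
    cosetPoly_mul_cosetPoly_dvd hm
      ((mul_dvd_mul_right (by norm_num) _).trans hcard) hU hV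
  refine exists_mds_selfDual_of_isSquare_derivative hn
    ((monic_cosetPoly hf₁).mul (monic_cosetPoly hf₂)) (splits_of_dvd_X_pow_card_sub_X hdvd)
    (separable_of_dvd_X_pow_card_sub_X hdvd) ?_ fun x hx ↦ ?_
  · rw [(monic_cosetPoly hf₁).natDegree_mul (monic_cosetPoly hf₂), natDegree_cosetPoly,
      natDegree_cosetPoly]
  · rw [neg_eq_neg_one_mul]
    exact (isSquare_neg_one_of_card_eq_sq hr hF).mul
      (isSquare_eval_derivative_cosetPoly_mul hr hF hodd hD₁ hD₂ hm hcard hU hV heven hx)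

end TwoCosetFamilies

section Arithmetic

lemma odd_of_mul_mod_two_pow_succ {a b l : ℕ} (hb : 2 ^ l ∣ b)
    (h : a * b % 2 ^ (l + 1) = 2 ^ l) : Odd a := by
  by_contra ha
  rw [Nat.not_odd_iff_even] at ha
  have hdvd : 2 ^ (l + 1) ∣ a * b := pow_succ' 2 l ▸ mul_dvd_mul ha.two_dvd hb
  exact (Nat.two_pow_pos l).ne (Nat.mod_eq_zero_of_dvd hdvd ▸ h)

lemma dvd_half_succ_of_dvd_mul_succ {a b r : ℕ} (hab : a.Coprime b) (ha : Odd a) (hr : Odd r)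
    (h : a ∣ b * (r + 1)) : a ∣ (r + 1) / 2 := by
  have hdvd : a ∣ r + 1 := hab.dvd_of_dvd_mul_left h
  rw [← two_mul_half_succ hr] at hdvd
  exact (Nat.coprime_two_right.2 ha).dvd_of_dvd_mul_left hdvd

lemma two_mul_dvd_pred_of_dvd_mul_pred {a b r : ℕ} (hab : a.Coprime b) (ha : Odd a)
    (h : 2 * b ∣ a * (r - 1)) : 2 * b ∣ r - 1 :=
  (Nat.Coprime.mul_left (Nat.coprime_two_left.2 ha) hab.symm).dvd_of_dvd_mul_left h

lemma even_mul_half_succ_of_four_dvd {a r : ℕ} (hr : Odd r) (h : 4 ∣ a * (r + 1)) :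
    Even (a * ((r + 1) / 2)) := by
  rw [← two_mul_half_succ hr, mul_left_comm] at h
  exact even_iff_two_dvd.2 (Nat.dvd_of_mul_dvd_mul_left two_pos h)

end Arithmetic

/-- Theorem 3.2(2): if `n₁ = s·f₁ + t·f₂` is odd, there is a `q`-ary MDS self-dual code
of length `n₁ + 1`, where `q = r²`. -/
theorem mds_self_dual_of_odd_length_succ
    (r e1 f1 e2 f2 s t l : ℕ)
    (hr_odd : Odd r) (hr_pp : IsPrimePow r)
    (hq1 : r ^ 2 - 1 = e1 * f1) (hq2 : r ^ 2 - 1 = e2 * f2)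
    (hl : 2 ≤ l) (he1 : e1 % 2 ^ (l + 1) = 2 ^ l) (he2 : 2 ^ l ∣ e2)
    (hdvd1 : 2 * e2 ∣ e1 * (r - 1)) (hdvd2 : e1 ∣ e2 * (r + 1))
    (hs1 : 1 ≤ s) (hs2 : s ≤ e1 / Nat.gcd e1 e2)
    (ht1 : 1 ≤ t) (ht2 : t ≤ e2 / Nat.gcd e1 e2)
    (h4 : 4 ∣ (s - 1) * (r + 1))
    (hn1 : Odd (s * f1 + t * f2))
    (F : Type*) [Field F] [Fintype F] [DecidableEq F]
    (hF : Fintype.card F = r ^ 2) :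
    ∃ C : Submodule F (Fin (s * f1 + t * f2 + 1) → F),
      dualCode C = C ∧
      Module.finrank F C = (s * f1 + t * f2 + 1) / 2 ∧
      IsMinDist C ((s * f1 + t * f2 + 1) / 2 + 1) := by
  have hcard : r ^ 2 - 1 ≠ 0 := hF ▸ (Nat.sub_pos_of_lt Fintype.one_lt_card).ne'
  have hl1 : 2 ^ l ∣ e1 := (Nat.dvd_mod_iff (pow_dvd_pow 2 l.le_succ)).1 (dvd_of_eq he1.symm)
  have hld : 2 ^ l ∣ e1.gcd e2 := Nat.dvd_gcd hl1 he2
  have hd : 0 < e1.gcd e2 := Nat.gcd_pos_of_pos_left _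
    (Nat.pos_of_ne_zero (left_ne_zero_of_mul (hq1 ▸ hcard)))
  obtain ⟨D₁, D₂, hcop, he₁, he₂⟩ := Nat.exists_coprime e1 e2
  generalize e1.gcd e2 = d at *
  subst he₁ he₂
  rw [Nat.mul_div_cancel _ hd] at hs2 ht2
  have hodd : Odd D₁ := odd_of_mul_mod_two_pow_succ hld he1
  have hD₁ : D₁ ∣ (r + 1) / 2 := dvd_half_succ_of_dvd_mul_succ hcop hodd hr_odd
    (Nat.dvd_of_mul_dvd_mul_right hd (by convert hdvd2 using 1; ring))
  have hD₂ : 2 * D₂ ∣ r - 1 := two_mul_dvd_pred_of_dvd_mul_pred hcop hodd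
    (Nat.dvd_of_mul_dvd_mul_right hd (by convert hdvd1 using 1 <;> ring))
  have hm : D₁ * f1 = D₂ * f2 := Nat.eq_of_mul_eq_mul_right hd (by linarith)
  have hdvd : 4 * (D₁ * f1) ∣ Fintype.card F - 1 := by
    rw [hF, hq1, mul_right_comm, mul_comm]
    exact mul_dvd_mul_left _ ((pow_dvd_pow 2 hl).trans hld)
  obtain ⟨m, hn⟩ := hn1
  rw [show (s * f1 + t * f2 + 1) / 2 = m + 1 by omega]
  exact exists_mds_selfDual_of_card_eq_sq hr_odd hF hodd hD₁ hD₂ hm hdvd hs2 ht2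
    (even_mul_half_succ_of_four_dvd hr_odd h4) hn
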